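/- arXiv:2510.12767 — 2 statements merged into one kernel-verified Lean document; each statement's English description precedes it below -/
import Mathlib

section
/- Let G be a finite abelian group, H ≤ G, k ≥ 0, δ ∈ (0,1), and let A ⊆ G have VC-dimension at most k relative to H. Then |Stab_δ(A) ∩ H| ≥ (δ/30)^k |H|. -/
open Finset in
/-- The number of edges of the one-inclusion graph of a set family is at most its VC-dimension
times its size. -/
theorem Finset.sum_card_oneInclusion_le {ι : Type*} [Fintype ι] [DecidableEq ι]
    (V : Finset (Finset ι)) (d : ℕ) (hV : ∀ S, V.Shatters S → #S ≤ d) :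
    ∑ i, #{Q ∈ V | i ∉ Q ∧ insert i Q ∈ V} ≤ d * #V := by
  suffices H : ∀ u : Finset ι, ∀ (V : Finset (Finset ι)) (d : ℕ), (∀ Q ∈ V, Q ⊆ u) →
      (∀ S, V.Shatters S → #S ≤ d) → ∑ i, #{Q ∈ V | i ∉ Q ∧ insert i Q ∈ V} ≤ d * #V from
    H univ V d (fun Q _ => subset_univ Q) hV
  intro u
  induction u using Finset.induction_on with
  | empty =>
    intro V d hu _
    have h0 : ∀ i : ι, #{Q ∈ V | i ∉ Q ∧ insert i Q ∈ V} = 0 := by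
      intro i
      rw [card_eq_zero, filter_eq_empty_iff]
      rintro Q - ⟨-, h⟩
      exact absurd (hu _ h (mem_insert_self i Q)) (notMem_empty i)
    simp [h0]
  | insert a u ha ih =>
    intro V d hu hV
    set A := V.nonMemberSubfamily a with hA
    set B := V.memberSubfamily a with hB
    have haA : ∀ Q ∈ A, a ∉ Q := fun Q hQ => (mem_nonMemberSubfamily.1 hQ).2
    have haB : ∀ Q ∈ B, a ∉ Q := fun Q hQ => (mem_memberSubfamily.1 hQ).2
    have hcard : #A + #B = #V := by
      rw [add_comm]; exact card_memberSubfamily_add_card_nonMemberSubfamily a V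
    have huA : ∀ Q ∈ A, Q ⊆ u := fun Q hQ =>
      (subset_insert_iff_of_notMem (haA Q hQ)).1 (hu Q (mem_nonMemberSubfamily.1 hQ).1)
    have huB : ∀ Q ∈ B, Q ⊆ u := fun Q hQ =>
      (subset_insert_iff_of_notMem (haB Q hQ)).1
        ((subset_insert a Q).trans (hu _ (mem_memberSubfamily.1 hQ).1))
    have hunion : ∀ S, (A ∪ B).Shatters S → #S ≤ d := by
      intro S hS
      have haS : a ∉ S := by
        intro haS
        obtain ⟨Q, hQ, hQS⟩ := hS (Subset.refl S)
        have : a ∈ Q := mem_of_mem_inter_right (hQS.symm ▸ haS)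
        rcases mem_union.1 hQ with h | h
        exacts [haA Q h this, haB Q h this]
      refine hV S fun R hR => ?_
      obtain ⟨Q, hQ, hQS⟩ := hS hR
      rcases mem_union.1 hQ with h | h
      · exact ⟨Q, (mem_nonMemberSubfamily.1 h).1, hQS⟩
      · exact ⟨insert a Q, (mem_memberSubfamily.1 h).1, by rw [inter_insert_of_notMem haS, hQS]⟩
    have hinter : ∀ S, (A ∩ B).Shatters S → #S + 1 ≤ d := by
      intro S hS
      have haS : a ∉ S := by
        intro haS
        obtain ⟨Q, hQ, hQS⟩ := hS (Subset.refl S)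
        have : a ∈ Q := mem_of_mem_inter_right (hQS.symm ▸ haS)
        exact haA Q (mem_inter.1 hQ).1 this
      rw [← card_insert_of_notMem haS]
      refine hV _ fun R hR => ?_
      obtain ⟨Q, hQ, hQS⟩ := hS (show R.erase a ⊆ S by
        rwa [← subset_insert_iff])
      have hQA := mem_nonMemberSubfamily.1 (mem_inter.1 hQ).1
      have hQB := mem_memberSubfamily.1 (mem_inter.1 hQ).2
      by_cases haR : a ∈ R
      · exact ⟨insert a Q, hQB.1, by rw [← insert_inter_distrib, hQS, insert_erase haR]⟩
      · exact ⟨Q, hQA.1, by rw [insert_inter_of_notMem hQA.2, hQS, erase_eq_of_notMem haR]⟩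
    have hia : #{Q ∈ V | a ∉ Q ∧ insert a Q ∈ V} = #(A ∩ B) := by
      congr 1
      ext Q
      simp only [mem_filter, mem_inter, hA, hB, mem_nonMemberSubfamily, mem_memberSubfamily]
      tauto
    have hi : ∀ i ∈ univ.erase a, #{Q ∈ V | i ∉ Q ∧ insert i Q ∈ V} ≤
        #{Q ∈ A ∪ B | i ∉ Q ∧ insert i Q ∈ A ∪ B} +
        #{Q ∈ A ∩ B | i ∉ Q ∧ insert i Q ∈ A ∩ B} := by
      intro i hi
      have hne : i ≠ a := (mem_erase.1 hi).1
      set V' := V.filter (fun Q => i ∉ Q ∧ insert i Q ∈ V)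
      have h1 : V'.nonMemberSubfamily a = A.filter (fun Q => i ∉ Q ∧ insert i Q ∈ A) := by
        ext Q
        simp only [V', hA, mem_filter, mem_nonMemberSubfamily, mem_insert]
        have := hne.symm
        tauto
      have h2 : V'.memberSubfamily a = B.filter (fun Q => i ∉ Q ∧ insert i Q ∈ B) := by
        ext Q
        simp only [V', hB, mem_filter, mem_memberSubfamily, mem_insert, insert_comm i a Q]
        have := hne.symm
        tauto
      rw [← card_memberSubfamily_add_card_nonMemberSubfamily a V', h1, h2,
        ← card_union_add_card_inter]
      refine add_le_add (card_le_card fun Q => ?_) (card_le_card fun Q => ?_)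
      · simp only [mem_union, mem_filter]; tauto
      · simp only [mem_inter, mem_filter]; tauto
    rw [← add_sum_erase _ _ (mem_univ a), hia]
    have hU := ih (A ∪ B) d (fun Q hQ => (mem_union.1 hQ).elim (huA Q) (huB Q)) hunion
    have hI : #(A ∩ B) + ∑ i, #{Q ∈ A ∩ B | i ∉ Q ∧ insert i Q ∈ A ∩ B} ≤ d * #(A ∩ B) := by
      rcases (A ∩ B).eq_empty_or_nonempty with h | h
      · simp [h]
      · obtain ⟨Q, hQ⟩ := h
        have h1 : 1 ≤ d := by
          simpa using hinter ∅ (fun R hR => ⟨Q, hQ, by simp [subset_empty.1 hR]⟩)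
        obtain ⟨e, rfl⟩ := Nat.exists_eq_add_of_le' h1
        have := ih (A ∩ B) e (fun Q hQ => huA Q (mem_inter.1 hQ).1)
          (fun S hS => by have := hinter S hS; omega)
        linarith
    have hsum := (sum_le_sum hi).trans (sum_le_univ_sum_of_nonneg (fun _ => Nat.zero_le _))
    rw [sum_add_distrib] at hsum
    have := card_union_add_card_inter A B
    nlinarith

open Finset in
/-- Weighted form of `Finset.sum_card_oneInclusion_le`. -/
theorem Finset.sum_min_oneInclusion_le {ι : Type*} [Fintype ι] [DecidableEq ι]
    (w : Finset ι → ℕ) (d : ℕ)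
    (hw : ∀ S, ({Q | 0 < w Q} : Finset (Finset ι)).Shatters S → #S ≤ d) :
    ∑ i, ∑ Q with i ∉ Q, min (w Q) (w (insert i Q)) ≤ d * ∑ Q, w Q := by
  set N := ∑ Q, w Q
  have hN : ∀ Q, w Q ≤ N := fun Q => single_le_sum (fun _ _ => Nat.zero_le _) (mem_univ Q)
  have hcount : ∀ n ≤ N, n = ∑ t ∈ range N, if t < n then 1 else 0 := by
    intro n hn
    rw [sum_boole, Nat.cast_id]
    conv_lhs => rw [← card_range n]
    congr 1
    ext t
    simp only [mem_range, mem_filter]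
    omega
  have hlayer : ∀ t ∈ range N, ∑ i, #{Q ∈ ({Q | t < w Q} : Finset (Finset ι)) |
      i ∉ Q ∧ insert i Q ∈ ({Q | t < w Q} : Finset (Finset ι))} ≤
      d * #{Q | t < w Q} := fun t _ =>
    sum_card_oneInclusion_le _ d fun S hS => hw S (hS.mono_left fun Q hQ => by
      simp only [mem_filter, mem_univ, true_and] at hQ ⊢; omega)
  calc ∑ i, ∑ Q with i ∉ Q, min (w Q) (w (insert i Q))
      = ∑ i, ∑ Q with i ∉ Q, ∑ t ∈ range N, if t < min (w Q) (w (insert i Q)) then 1 else 0 :=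
        sum_congr rfl fun i _ => sum_congr rfl fun Q _ =>
          hcount _ ((min_le_left _ _).trans (hN Q))
    _ = ∑ t ∈ range N, ∑ i, #{Q ∈ ({Q | t < w Q} : Finset (Finset ι)) |
          i ∉ Q ∧ insert i Q ∈ ({Q | t < w Q} : Finset (Finset ι))} := by
        rw [sum_comm]
        refine sum_congr rfl fun i _ => ?_
        rw [sum_comm]
        refine sum_congr rfl fun t _ => ?_
        rw [sum_boole, Nat.cast_id]
        congr 1
        ext Q
        simp only [mem_filter, mem_univ, true_and, lt_min_iff]
        tauto
    _ ≤ ∑ t ∈ range N, d * #{Q | t < w Q} := sum_le_sum hlayer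
    _ = d * ∑ Q, w Q := by
        rw [← mul_sum]
        congr 1
        rw [sum_congr rfl fun Q _ => hcount (w Q) (hN Q), sum_comm]
        refine sum_congr rfl fun t _ => ?_
        rw [sum_boole, Nat.cast_id]

open Finset in
/-- The Sauer–Shelah lemma, for a family whose shattered sets have size at most `d`. -/
theorem Finset.card_le_sum_choose_of_shatters {ι : Type*} [Fintype ι] [DecidableEq ι]
    (V : Finset (Finset ι)) (d : ℕ) (hV : ∀ S, V.Shatters S → #S ≤ d) :
    #V ≤ ∑ i ∈ range (d + 1), (Fintype.card ι).choose i := by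
  refine (card_le_card_shatterer V).trans (card_shatterer_le_sum_vcDim.trans ?_)
  refine sum_le_sum_of_subset fun i hi => ?_
  have : V.vcDim ≤ d := Finset.sup_le fun S hS => hV S (mem_shatterer.1 hS)
  simp only [mem_Iic, mem_range] at hi ⊢
  omega

open Finset in
theorem Nat.sum_choose_le_three_mul_div_pow (s d : ℕ) (hd : 1 ≤ d) (hds : d ≤ s) :
    ((∑ i ∈ range (d + 1), s.choose i : ℕ) : ℝ) ≤ (3 * s / d) ^ d := by
  have hd0 : (0 : ℝ) < d := by exact_mod_cast hd
  have hs0 : (0 : ℝ) < s := by exact_mod_cast hd.trans hds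
  set q : ℝ := d / s with hq
  have hq0 : 0 < q := by positivity
  have hq1 : q ≤ 1 := (div_le_one hs0).2 (by exact_mod_cast hds)
  have key : q ^ d * ((∑ i ∈ range (d + 1), s.choose i : ℕ) : ℝ) ≤ 3 ^ d := by
    calc q ^ d * ((∑ i ∈ range (d + 1), s.choose i : ℕ) : ℝ)
        = ∑ i ∈ range (d + 1), q ^ d * (s.choose i : ℝ) := by push_cast; rw [mul_sum]
      _ ≤ ∑ i ∈ range (d + 1), q ^ i * (s.choose i : ℝ) := by
          refine sum_le_sum fun i hi => mul_le_mul_of_nonneg_right ?_ (Nat.cast_nonneg _)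
          exact pow_le_pow_of_le_one hq0.le hq1 (by simp only [mem_range] at hi; omega)
      _ ≤ ∑ i ∈ range (s + 1), q ^ i * (s.choose i : ℝ) := by
          refine sum_le_sum_of_subset_of_nonneg ?_ fun i _ _ => by positivity
          intro i; simp only [mem_range]; omega
      _ = (q + 1) ^ s := by simp [add_pow]
      _ ≤ Real.exp q ^ s := by gcongr; exact Real.add_one_le_exp q
      _ = Real.exp 1 ^ d := by
          rw [← Real.exp_nat_mul, ← Real.exp_nat_mul]
          congr 1
          rw [hq]; field_simp
      _ ≤ 3 ^ d := by gcongr; exact Real.exp_one_lt_three.le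
  have h3 : (3 * s / d : ℝ) = 3 / q := by rw [hq]; field_simp
  rw [h3, div_pow, le_div_iff₀ (by positivity), mul_comm]
  exact key

open Finset in
/-- In a family `C` of pairwise `ε`-separated sets, a point on average splits off a part of size
proportional to `ε`. -/
theorem Finset.le_sum_min_card_filter {α : Type*} [Fintype α] [DecidableEq α]
    (C : Finset (Finset α)) (ε : ℝ)
    (hsep : ∀ T ∈ C, ∀ T' ∈ C, T ≠ T' → ε ≤ #(symmDiff T T')) (hC : C.Nonempty) :
    ε / 2 * ((#C : ℝ) - 1) ≤
      ∑ g, ((min #{T ∈ C | g ∉ T} #{T ∈ C | g ∈ T} : ℕ) : ℝ) := by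
  have hb : (0 : ℝ) < #C := by exact_mod_cast hC.card_pos
  have hswap : ∀ f f' : Finset α → ℝ, ∑ T ∈ C, ∑ T' ∈ C, (f T * f' T' + f T' * f' T) =
      2 * ((∑ T ∈ C, f T) * ∑ T ∈ C, f' T) := by
    intro f f'
    simp only [sum_add_distrib]
    rw [sum_comm (f := fun T T' => f T' * f' T), ← sum_mul_sum]
    ring
  have hprod : ε * (#C * ((#C : ℝ) - 1)) ≤
      2 * ∑ g, (#{T ∈ C | g ∉ T} : ℝ) * #{T ∈ C | g ∈ T} := by
    calc ε * (#C * ((#C : ℝ) - 1)) = ∑ p ∈ C.offDiag, ε := by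
          rw [sum_const, offDiag_card, nsmul_eq_mul, Nat.cast_sub (Nat.le_mul_self _)]
          push_cast; ring
      _ ≤ ∑ p ∈ C.offDiag, (#(symmDiff p.1 p.2) : ℝ) := sum_le_sum fun p hp => by
          obtain ⟨h1, h2, h3⟩ := mem_offDiag.1 hp
          exact hsep _ h1 _ h2 h3
      _ ≤ ∑ p ∈ C ×ˢ C, (#(symmDiff p.1 p.2) : ℝ) :=
          sum_le_sum_of_subset_of_nonneg
            (fun p hp => mem_product.2 ⟨(mem_offDiag.1 hp).1, (mem_offDiag.1 hp).2.1⟩)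
            fun _ _ _ => by positivity
      _ = ∑ p ∈ C ×ˢ C, ∑ g, ((if g ∉ p.1 then 1 else 0) * (if g ∈ p.2 then 1 else 0) +
            (if g ∉ p.2 then 1 else 0) * (if g ∈ p.1 then 1 else 0) : ℝ) := by
          refine sum_congr rfl fun p _ => ?_
          rw [← filter_univ_mem (symmDiff p.1 p.2), ← sum_boole]
          refine sum_congr rfl fun g _ => ?_
          by_cases h1 : g ∈ p.1 <;> by_cases h2 : g ∈ p.2 <;> simp [mem_symmDiff, h1, h2]
      _ = 2 * ∑ g, (#{T ∈ C | g ∉ T} : ℝ) * #{T ∈ C | g ∈ T} := by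
          rw [sum_comm, mul_sum]
          refine sum_congr rfl fun g _ => ?_
          rw [sum_product, hswap (fun T => if g ∉ T then 1 else 0) fun T => if g ∈ T then 1 else 0,
            sum_boole, sum_boole]
  have hmin : ∀ g, (#{T ∈ C | g ∉ T} : ℝ) * #{T ∈ C | g ∈ T} ≤
      #C * ((min #{T ∈ C | g ∉ T} #{T ∈ C | g ∈ T} : ℕ) : ℝ) := by
    intro g
    norm_cast
    rw [← min_mul_max, mul_comm]
    exact Nat.mul_le_mul_right _ (max_le (card_filter_le _ _) (card_filter_le _ _))
  have hsum := sum_le_sum fun g (_ : g ∈ univ) => hmin g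
  rw [← mul_sum] at hsum
  refine le_of_mul_le_mul_left ?_ hb
  linarith

/-- The trace of a set on a tuple of points. -/
def Finset.tupleTrace {α ι : Type*} [Fintype ι] [DecidableEq α] (x : ι → α) (T : Finset α) :
    Finset ι :=
  {i | x i ∈ T}

open Finset in
theorem Finset.mem_tupleTrace {α ι : Type*} [Fintype ι] [DecidableEq α] {x : ι → α}
    {T : Finset α} {i : ι} : i ∈ tupleTrace x T ↔ x i ∈ T := by
  simp [tupleTrace]

open Finset in
theorem Finset.card_le_of_forall_exists_tupleTrace {α ι : Type*} [Fintype ι] [DecidableEq α]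
    [DecidableEq ι] (F : Finset (Finset α)) (d : ℕ) (hF : ∀ S, F.Shatters S → #S ≤ d)
    (x : ι → α) (S : Finset ι) (hS : ∀ R ⊆ S, ∃ T ∈ F, S ∩ tupleTrace x T = R) : #S ≤ d := by
  have hinj : Set.InjOn x S := by
    intro i hi j hj hij
    obtain ⟨T, -, hT⟩ := hS {i} (singleton_subset_iff.2 hi)
    have hiT : i ∈ S ∩ tupleTrace x T := hT ▸ mem_singleton_self i
    have hjT : j ∈ S ∩ tupleTrace x T := by
      rw [mem_inter, mem_tupleTrace] at hiT ⊢
      exact ⟨hj, hij ▸ hiT.2⟩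
    rw [hT, mem_singleton] at hjT
    exact hjT.symm
  rw [← card_image_of_injOn hinj]
  refine hF _ fun R hR => ?_
  obtain ⟨T, hT, hTR⟩ := hS {i ∈ S | x i ∈ R} (filter_subset _ _)
  refine ⟨T, hT, ?_⟩
  ext a
  rw [mem_inter]
  constructor
  · rintro ⟨ha, haT⟩
    obtain ⟨i, hi, rfl⟩ := mem_image.1 ha
    have : i ∈ S ∩ tupleTrace x T := mem_inter.2 ⟨hi, mem_tupleTrace.2 haT⟩
    rw [hTR] at this
    exact (mem_filter.1 this).2
  · intro ha
    obtain ⟨i, hi, rfl⟩ := mem_image.1 (hR ha)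
    have : i ∈ S ∩ tupleTrace x T := hTR ▸ mem_filter.2 ⟨hi, ha⟩
    exact ⟨hR ha, mem_tupleTrace.1 (mem_inter.1 this).2⟩

open Finset in
theorem Finset.le_sum_sum_min_tupleTrace {α ι : Type*} [Fintype α] [DecidableEq α] [Fintype ι]
    [DecidableEq ι] (F : Finset (Finset α)) (d : ℕ) (hF : ∀ S, F.Shatters S → #S ≤ d)
    (ε : ℝ) (hε : 0 ≤ ε) (hsep : ∀ T ∈ F, ∀ T' ∈ F, T ≠ T' → ε ≤ #(symmDiff T T'))
    (x : ι → α) (i : ι) :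
    ε / 2 * ((#F : ℝ) - (∑ j ∈ range (d + 1), (Fintype.card ι).choose j : ℕ)) ≤
      ∑ g, ((∑ Q with i ∉ Q, min #{T ∈ F | tupleTrace (Function.update x i g) T = Q}
        #{T ∈ F | tupleTrace (Function.update x i g) T = insert i Q} : ℕ) : ℝ) := by
  set c : Finset α → Finset ι := fun T => (tupleTrace x T).erase i with hc
  have hic : ∀ T, i ∉ c T := fun T => notMem_erase i _
  have h0 : ∀ g Q, i ∉ Q → ({T ∈ F | tupleTrace (Function.update x i g) T = Q}) =
      {T ∈ {T ∈ F | c T = Q} | g ∉ T} := by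
    intro g Q hQ
    ext T
    simp only [mem_filter, and_assoc, and_congr_right_iff, Finset.ext_iff, hc, mem_erase,
      mem_tupleTrace]
    intro _
    constructor
    · intro h
      have hg : g ∉ T := by simpa [hQ] using h i
      refine ⟨fun j => ?_, hg⟩
      by_cases hj : j = i
      · subst hj; simp [hQ]
      · simpa [hj] using h j
    · rintro ⟨h, hg⟩ j
      by_cases hj : j = i
      · subst hj; simp [hQ, hg]
      · simpa [hj] using h j
  have h1 : ∀ g Q, i ∉ Q → ({T ∈ F | tupleTrace (Function.update x i g) T = insert i Q}) =
      {T ∈ {T ∈ F | c T = Q} | g ∈ T} := by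
    intro g Q hQ
    ext T
    simp only [mem_filter, and_assoc, and_congr_right_iff, Finset.ext_iff, hc, mem_erase,
      mem_tupleTrace, mem_insert]
    intro _
    constructor
    · intro h
      have hg : g ∈ T := by simpa using h i
      refine ⟨fun j => ?_, hg⟩
      by_cases hj : j = i
      · subst hj; simp [hQ]
      · simpa [hj] using h j
    · rintro ⟨h, hg⟩ j
      by_cases hj : j = i
      · subst hj; simp [hg]
      · simpa [hj] using h j
  have hsauer : #(F.image c) ≤ ∑ j ∈ range (d + 1), (Fintype.card ι).choose j := by
    refine card_le_sum_choose_of_shatters _ d fun S hS => ?_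
    have hiS : i ∉ S := by
      intro hiS
      obtain ⟨Q, hQ, hSQ⟩ := hS.exists_superset
      obtain ⟨T, -, rfl⟩ := mem_image.1 hQ
      exact hic T (hSQ hiS)
    refine card_le_of_forall_exists_tupleTrace F d hF x S fun R hR => ?_
    obtain ⟨Q, hQ, hSQ⟩ := hS hR
    obtain ⟨T, hT, rfl⟩ := mem_image.1 hQ
    exact ⟨T, hT, by rw [← hSQ, hc, inter_erase, ← erase_inter, erase_eq_of_notMem hiS]⟩
  calc ε / 2 * ((#F : ℝ) - (∑ j ∈ range (d + 1), (Fintype.card ι).choose j : ℕ))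
      ≤ ε / 2 * ((#F : ℝ) - #(F.image c)) := by gcongr
    _ = ∑ Q ∈ F.image c, ε / 2 * ((#{T ∈ F | c T = Q} : ℝ) - 1) := by
        rw [← mul_sum, sum_sub_distrib, ← Nat.cast_sum,
          ← card_eq_sum_card_fiberwise fun T hT => mem_image_of_mem c hT]
        simp
    _ ≤ ∑ Q ∈ F.image c, ∑ g, ((min #{T ∈ {T ∈ F | c T = Q} | g ∉ T}
          #{T ∈ {T ∈ F | c T = Q} | g ∈ T} : ℕ) : ℝ) := by
        refine sum_le_sum fun Q hQ => le_sum_min_card_filter _ ε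
          (fun T hT T' hT' => hsep T (mem_filter.1 hT).1 T' (mem_filter.1 hT').1) ?_
        obtain ⟨T, hT, rfl⟩ := mem_image.1 hQ
        exact ⟨T, mem_filter.2 ⟨hT, rfl⟩⟩
    _ = ∑ g, ∑ Q ∈ F.image c, ((min #{T ∈ {T ∈ F | c T = Q} | g ∉ T}
          #{T ∈ {T ∈ F | c T = Q} | g ∈ T} : ℕ) : ℝ) := sum_comm
    _ ≤ _ := by
        refine sum_le_sum fun g _ => ?_
        rw [← Nat.cast_sum, Nat.cast_le]
        have hsub : F.image c ⊆ ({Q | i ∉ Q} : Finset (Finset ι)) := by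
          intro Q hQ
          obtain ⟨T, -, rfl⟩ := mem_image.1 hQ
          exact mem_filter.2 ⟨mem_univ _, hic T⟩
        refine le_trans (le_of_eq ?_) (sum_le_sum_of_subset hsub)
        refine sum_congr rfl fun Q hQ => ?_
        have hiQ := (mem_filter.1 (hsub hQ)).2
        rw [h0 g Q hiQ, h1 g Q hiQ]

open Finset in
theorem Fintype.sum_sum_update {α ι M : Type*} [Fintype α] [Fintype ι] [DecidableEq ι]
    [AddCommMonoid M] (f : (ι → α) → M) (i : ι) :
    ∑ x, ∑ g, f (Function.update x i g) = Fintype.card α • ∑ x, f x := by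
  have hcard : Fintype.card α • ∑ x, f x = ∑ x, ∑ _g : α, f x := by
    simp [sum_const, smul_sum]
  rw [hcard, ← Fintype.sum_prod_type' (f := fun x g => f (Function.update x i g)),
    ← Fintype.sum_prod_type' (f := fun x (_ : α) => f x)]
  have hinv : Function.Involutive fun p : (ι → α) × α => (Function.update p.1 i p.2, p.1 i) := by
    intro p
    simp
  exact Equiv.sum_comp hinv.toPerm fun p : (ι → α) × α => f p.1

open Finset in
/-- The double count behind Haussler's packing lemma, for random tuples indexed by `ι`. -/
theorem Finset.card_mul_sub_le_of_separated {α : Type*} (ι : Type*) [Fintype α] [DecidableEq α]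
    [Nonempty α] [Fintype ι] [DecidableEq ι] (F : Finset (Finset α)) (d : ℕ)
    (hF : ∀ S, F.Shatters S → #S ≤ d) (δ : ℝ) (hδ : 0 ≤ δ)
    (hsep : ∀ T ∈ F, ∀ T' ∈ F, T ≠ T' → δ * Fintype.card α ≤ #(symmDiff T T')) :
    Fintype.card ι * (δ / 2 *
      ((#F : ℝ) - (∑ j ∈ range (d + 1), (Fintype.card ι).choose j : ℕ))) ≤ d * #F := by
  set n : ℝ := (Fintype.card α : ℝ) with hn
  have hn0 : 0 < n := Nat.cast_pos.2 Fintype.card_pos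
  set B : ℝ := (#F : ℝ) - (∑ j ∈ range (d + 1), (Fintype.card ι).choose j : ℕ) with hB
  let w : (ι → α) → Finset ι → ℕ := fun x Q => #{T ∈ F | tupleTrace x T = Q}
  let W : (ι → α) → ι → ℝ := fun x i =>
    ((∑ Q with i ∉ Q, min (w x Q) (w x (insert i Q)) : ℕ) : ℝ)
  have hupper : ∀ x, ∑ i, W x i ≤ d * #F := by
    intro x
    have hw : ∑ Q, w x Q = #F :=
      (card_eq_sum_card_fiberwise fun T _ => mem_coe.2 (mem_univ (tupleTrace x T))).symm
    have h := sum_min_oneInclusion_le (w x) d fun S hS =>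
      card_le_of_forall_exists_tupleTrace F d hF x S fun R hR => by
        obtain ⟨Q, hQ, hSQ⟩ := hS hR
        obtain ⟨T, hT⟩ := card_pos.1 (mem_filter.1 hQ).2
        obtain ⟨hTF, rfl⟩ := mem_filter.1 hT
        exact ⟨T, hTF, hSQ⟩
    rw [hw] at h
    simp only [W]
    exact_mod_cast h
  have hlower : ∀ i, Fintype.card (ι → α) * (δ / 2 * B) ≤ ∑ x, W x i := by
    intro i
    have h := sum_le_sum fun x (_ : x ∈ univ) =>
      le_sum_sum_min_tupleTrace F d hF (δ * n) (by positivity) hsep x i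
    rw [Fintype.sum_sum_update (fun x => W x i) i, sum_const, card_univ, nsmul_eq_mul,
      nsmul_eq_mul, ← hn, ← hB] at h
    refine le_of_mul_le_mul_left ?_ hn0
    linarith
  have hN : (0 : ℝ) < Fintype.card (ι → α) := by exact_mod_cast Fintype.card_pos
  refine le_of_mul_le_mul_left ?_ hN
  calc (Fintype.card (ι → α) : ℝ) * (Fintype.card ι * (δ / 2 * B))
      = ∑ _i : ι, Fintype.card (ι → α) * (δ / 2 * B) := by
        rw [sum_const, card_univ, nsmul_eq_mul]; ring
    _ ≤ ∑ i, ∑ x, W x i := sum_le_sum fun i _ => hlower i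
    _ = ∑ x, ∑ i, W x i := sum_comm
    _ ≤ ∑ _x : ι → α, (d * #F : ℝ) := sum_le_sum fun x _ => hupper x
    _ = _ := by rw [sum_const, card_univ, nsmul_eq_mul]

open Finset in
/-- **Haussler's packing lemma**. -/
theorem Finset.card_le_of_separated_of_shatters {α : Type*} [Fintype α] [DecidableEq α]
    [Nonempty α] (F : Finset (Finset α)) (d : ℕ)
    (hF : ∀ S, F.Shatters S → #S ≤ d) (δ : ℝ) (hδ0 : 0 < δ) (hδ1 : δ ≤ 1)
    (hsep : ∀ T ∈ F, ∀ T' ∈ F, T ≠ T' → δ * Fintype.card α ≤ #(symmDiff T T')) :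
    (#F : ℝ) ≤ (30 / δ) ^ d := by
  rcases Nat.eq_zero_or_pos d with rfl | hd
  · simpa using card_le_sum_choose_of_shatters F 0 hF
  have hd1 : (1 : ℝ) ≤ d := by exact_mod_cast hd
  set s := ⌈4 * d / δ⌉₊ with hs
  have hs1 : 4 * d ≤ s * δ := (div_le_iff₀ hδ0).1 (Nat.le_ceil _)
  have hs2 : s * δ ≤ 5 * d := by
    have h := Nat.ceil_lt_add_one (show 0 ≤ 4 * d / δ by positivity)
    rw [← hs, ← sub_lt_iff_lt_add, lt_div_iff₀ hδ0] at h
    linarith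
  have hds : d ≤ s := by
    have : (d : ℝ) ≤ s := by nlinarith [Nat.cast_nonneg (α := ℝ) s]
    exact_mod_cast this
  have hchoose := Nat.sum_choose_le_three_mul_div_pow s d hd hds
  have hmain := card_mul_sub_le_of_separated (Fin s) F d hF δ hδ0.le hsep
  rw [Fintype.card_fin] at hmain
  set Φ : ℝ := ((∑ j ∈ range (d + 1), s.choose j : ℕ) : ℝ)
  have hF2 : (#F : ℝ) ≤ 2 * Φ := by
    by_contra! h
    have hpos : 0 < (#F : ℝ) - Φ := by
      have : 0 ≤ Φ := Nat.cast_nonneg _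
      linarith
    have h4 := mul_le_mul_of_nonneg_right hs1 hpos.le
    nlinarith
  have hΦ : Φ ≤ (15 / δ) ^ d := by
    refine hchoose.trans (pow_le_pow_left₀ (by positivity) ?_ d)
    rw [div_le_div_iff₀ (by positivity) hδ0]
    linarith
  calc (#F : ℝ) ≤ 2 * (15 / δ) ^ d := by linarith
    _ ≤ 2 ^ d * (15 / δ) ^ d := by
        gcongr
        exact le_self_pow₀ one_le_two hd.ne'
    _ = (30 / δ) ^ d := by rw [← mul_pow]; congr 1; ring

open Finset in
theorem Finset.symmDiff_image_add_right {G : Type*} [AddCommGroup G] [DecidableEq G]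
    (A : Finset G) (x y : G) :
    #(symmDiff (A.image (· + x)) (A.image (· + y))) =
      #(symmDiff A (A.image (· + (y - x)))) := by
  have h : A.image (· + y) = (A.image (· + (y - x))).image (· + x) := by
    rw [image_image]
    congr 1
    ext a
    simp only [Function.comp_apply]
    abel
  rw [h, ← image_symmDiff _ _ (add_left_injective x),
    card_image_of_injective _ (add_left_injective x)]

/-- If `A` has VC-dimension at most `k` relative to `H`, then
`|Stab_δ(A) ∩ H| ≥ (δ/30)^k |H|`. -/
theorem stmt_5 {G : Type*} [AddCommGroup G] [Fintype G] [DecidableEq G]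
    (A : Finset G) (H : AddSubgroup G) (k : ℕ) (δ : ℝ) (hδ0 : 0 < δ) (hδ1 : δ < 1)
    (hVC : ¬ ∃ (x : Fin (k+1) → G) (y : Set (Fin (k+1)) → G),
      (∀ S, y S ∈ H) ∧
      ∀ (i : Fin (k+1)) (S : Set (Fin (k+1))), x i + y S ∈ (A : Set G) ↔ i ∈ S) :
    (δ / 30) ^ k * Nat.card H ≤
      ({x : G | x ∈ H ∧
        ((symmDiff A (A.image (· + x))).card : ℝ) ≤ δ * Fintype.card G}).ncard := by
  classical
  let tr : G → Finset G := fun x => A.image (· + x)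
  let P : Finset G → Prop := fun X => (∀ x ∈ X, x ∈ H) ∧
    ∀ x ∈ X, ∀ y ∈ X, x ≠ y → δ * Fintype.card G < (symmDiff (tr x) (tr y)).card
  obtain ⟨X, ⟨hXH, hXsep⟩, hXmax⟩ := Set.Finite.exists_maximal (Set.toFinite {X | P X})
    ⟨∅, by simp [P]⟩
  have hinj : Set.InjOn tr X := by
    intro x hx y hy hxy
    by_contra hne
    have h := hXsep x hx y hy hne
    rw [hxy, symmDiff_self, Finset.bot_eq_empty, Finset.card_empty, Nat.cast_zero] at h
    exact absurd h (not_lt.2 (by positivity))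
  have hshatter : ∀ S, (X.image tr).Shatters S → S.card ≤ k := by
    intro S hS
    by_contra! hcard
    obtain ⟨S', hS'S, hS'card⟩ := Finset.exists_subset_card_eq (show k + 1 ≤ S.card from hcard)
    have hS' := hS.mono_right hS'S
    let e := S'.equivFinOfCardEq hS'card
    have hy : ∀ R : Set (Fin (k + 1)), ∃ y ∈ H, ∀ i, (e.symm i : G) + y ∈ A ↔ i ∈ R := by
      intro R
      obtain ⟨T, hT, hTR⟩ := hS' (Finset.filter_subset (fun g => ∃ i ∈ R, (e.symm i : G) = g) S')
      obtain ⟨x, hx, rfl⟩ := Finset.mem_image.1 hT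
      refine ⟨-x, H.neg_mem (hXH x hx), fun i => ?_⟩
      have h := Finset.ext_iff.1 hTR (e.symm i)
      simpa [tr, ← sub_eq_add_neg, sub_eq_iff_eq_add, eq_comm, ← eq_sub_iff_add_eq] using h
    choose y hyH hyA using hy
    exact hVC ⟨fun i => e.symm i, y, hyH, fun i R => hyA R i⟩
  have hXcard : (X.card : ℝ) ≤ (30 / δ) ^ k := by
    rw [← Finset.card_image_of_injOn hinj]
    refine Finset.card_le_of_separated_of_shatters _ k hshatter δ hδ0 hδ1.le
      fun T hT T' hT' hne => ?_
    obtain ⟨x, hx, rfl⟩ := Finset.mem_image.1 hT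
    obtain ⟨y, hy, rfl⟩ := Finset.mem_image.1 hT'
    exact (hXsep x hx y hy fun h => hne (h ▸ rfl)).le
  set Z := {x : G | x ∈ H ∧
    ((symmDiff A (A.image (· + x))).card : ℝ) ≤ δ * Fintype.card G} with hZ
  have h0Z : (0 : G) ∈ Z := ⟨H.zero_mem, by simp; positivity⟩
  have hcover : (H : Set G) ⊆ Set.image2 (· + ·) (X : Set G) Z := by
    intro h hh
    by_contra hnot
    have hfar : ∀ x ∈ X, δ * Fintype.card G < (symmDiff (tr x) (tr h)).card := by
      intro x hx
      by_contra! hle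
      rw [Finset.symmDiff_image_add_right] at hle
      exact hnot ⟨x, hx, h - x, ⟨H.sub_mem hh (hXH x hx), hle⟩, add_sub_cancel x h⟩
    have hhX : h ∉ X := fun hX => hnot ⟨h, hX, 0, h0Z, add_zero h⟩
    have hP : P (insert h X) := by
      refine ⟨fun x hx => ?_, fun x hx y hy hne => ?_⟩
      · rcases Finset.mem_insert.1 hx with rfl | hx
        exacts [hh, hXH x hx]
      · rcases Finset.mem_insert.1 hx with rfl | hxX <;>
          rcases Finset.mem_insert.1 hy with rfl | hyX
        · exact absurd rfl hne
        · rw [symmDiff_comm]; exact hfar y hyX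
        · exact hfar x hxX
        · exact hXsep x hxX y hyX hne
    exact hhX (hXmax hP (Finset.subset_insert h X) (Finset.mem_insert_self h X))
  have hcard : Nat.card H ≤ X.card * Z.ncard := by
    calc Nat.card H = (H : Set G).ncard := rfl
      _ ≤ (Set.image2 (· + ·) (X : Set G) Z).ncard := Set.ncard_le_ncard hcover (Set.toFinite _)
      _ ≤ ((X : Set G) ×ˢ Z).ncard := by
          rw [← Set.image_uncurry_prod]; exact Set.ncard_image_le (Set.toFinite _)
      _ = X.card * Z.ncard := by rw [Set.ncard_prod, Set.ncard_coe_finset]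
  calc (δ / 30) ^ k * Nat.card H ≤ (δ / 30) ^ k * ((30 / δ) ^ k * Z.ncard) := by
        gcongr
        calc (Nat.card H : ℝ) ≤ X.card * Z.ncard := by exact_mod_cast hcard
          _ ≤ _ := by gcongr
    _ = Z.ncard := by
        rw [← mul_assoc, ← mul_pow, show δ / 30 * (30 / δ) = 1 by field_simp, one_pow, one_mul]
end

section
/- Let G = F_p^n, H ≤ G a subgroup, and (G; A_0, A_1, A_2) a 3-coloring (partition of G into three parts) with |A_2| ≤ ε|G|, where 0 < δ < 1/4 and 0 < ε ≤ (δ/120)^{k+1}. If A_1|A_0 has VC-dimension at most k relative to H, then there exist m ≤ ⌈(120/δ)^k⌉ and h_1,…,h_m ∈ H such that for all h ∈ H there is i ∈ [m] with |(A_u − h) Δ (A_u − h_i)| ≤ δ|G| for both u = 0 and u = 1. -/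
/-- The `D` coordinates `e` are not shattered by the support of `w`, for any choice of `e`. -/
def NoShatter {s : ℕ} (D : ℕ) (w : (Fin s → Bool) → ℕ) : Prop :=
  ¬ ∃ e : Fin D → Fin s, ∀ b : Fin D → Bool, ∃ f, w f ≠ 0 ∧ ∀ j, f (e j) = b j

/-- The weight of the edges of the Boolean cube in direction `j`, each edge being weighted by the
minimum of its endpoints and counted once from each endpoint. -/
def edgeWeight {s : ℕ} (w : (Fin s → Bool) → ℕ) (j : Fin s) : ℕ :=
  ∑ f, min (w f) (w (Function.update f j (!f j)))

theorem sum_cube_insertNth {s : ℕ} {M : Type*} [AddCommMonoid M] (j : Fin (s + 1))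
    (F : (Fin (s + 1) → Bool) → M) :
    ∑ f, F f = ∑ g : Fin s → Bool,
      (F (j.insertNth (α := fun _ => Bool) true g) +
        F (j.insertNth (α := fun _ => Bool) false g)) := by
  rw [← (Fin.insertNthEquiv (fun _ => Bool) j).sum_comp, Fintype.sum_prod_type_right]
  simp [Fin.insertNthEquiv]

theorem sum_cube_cons {s : ℕ} {M : Type*} [AddCommMonoid M] (F : (Fin (s + 1) → Bool) → M) :
    ∑ f, F f = ∑ g : Fin s → Bool,
      (F (Fin.cons (α := fun _ => Bool) true g) + F (Fin.cons (α := fun _ => Bool) false g)) := by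
  simpa using sum_cube_insertNth 0 F

theorem NoShatter.eq_zero {s : ℕ} {w : (Fin s → Bool) → ℕ} (h : NoShatter 0 w) (f) : w f = 0 := by
  by_contra hf
  exact h ⟨Fin.elim0, fun b => ⟨f, hf, fun j => j.elim0⟩⟩

theorem NoShatter.max_cons {s D : ℕ} {w : (Fin (s + 1) → Bool) → ℕ} (h : NoShatter D w) :
    NoShatter D (fun g => max (w (Fin.cons (α := fun _ => Bool) true g))
      (w (Fin.cons (α := fun _ => Bool) false g))) := by
  rintro ⟨e, he⟩
  refine h ⟨fun i => (e i).succ, fun b => ?_⟩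
  obtain ⟨g, hg, hgb⟩ := he b
  by_cases h1 : w (Fin.cons (α := fun _ => Bool) true g) = 0
  · exact ⟨Fin.cons (α := fun _ => Bool) false g, fun h2 => hg (by simp [h1, h2]),
      fun j => by simpa using hgb j⟩
  · exact ⟨_, h1, fun j => by simpa using hgb j⟩

theorem NoShatter.min_cons {s D : ℕ} {w : (Fin (s + 1) → Bool) → ℕ} (h : NoShatter (D + 1) w) :
    NoShatter D (fun g => min (w (Fin.cons (α := fun _ => Bool) true g))
      (w (Fin.cons (α := fun _ => Bool) false g))) := by
  rintro ⟨e, he⟩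
  refine h ⟨Fin.cons (α := fun _ => Fin (s + 1)) 0 fun i => (e i).succ, fun b => ?_⟩
  obtain ⟨g, hg, hgb⟩ := he (Fin.tail b)
  refine ⟨Fin.cons (α := fun _ => Bool) (b 0) g, ?_, fun j => ?_⟩
  · cases b 0 <;> intro h0 <;> simp [h0] at hg
  · induction j using Fin.cases with
    | zero => simp
    | succ j => simpa [Fin.tail] using hgb j

theorem sum_cube_cons_eq_max_add_min {s : ℕ} (w : (Fin (s + 1) → Bool) → ℕ) :
    ∑ f, w f = ∑ g : Fin s → Bool, max (w (Fin.cons (α := fun _ => Bool) true g))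
        (w (Fin.cons (α := fun _ => Bool) false g)) +
      ∑ g : Fin s → Bool, min (w (Fin.cons (α := fun _ => Bool) true g))
        (w (Fin.cons (α := fun _ => Bool) false g)) := by
  rw [sum_cube_cons, ← Finset.sum_add_distrib]
  exact Finset.sum_congr rfl fun g _ => (max_add_min _ _).symm

/-- Weighted form of Haussler's bound on the number of edges of the one-inclusion graph. -/
theorem sum_edgeWeight_add_le {s : ℕ} : ∀ {D : ℕ} {w : (Fin s → Bool) → ℕ}, NoShatter D w →
    ∑ j, edgeWeight w j + 2 * ∑ f, w f ≤ 2 * D * ∑ f, w f := by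
  induction s with
  | zero =>
    rintro (_ | D) w h
    · simp [edgeWeight, h.eq_zero]
    · simp only [Finset.univ_eq_empty, Finset.sum_empty]
      nlinarith [Nat.zero_le (D * ∑ f, w f)]
  | succ s ih =>
    rintro (_ | D) w h
    · simp [edgeWeight, h.eq_zero]
    · have hmax := ih h.max_cons
      have hmin := ih h.min_cons
      have h0 : edgeWeight w 0 = 2 * ∑ g : Fin s → Bool,
          min (w (Fin.cons (α := fun _ => Bool) true g))
            (w (Fin.cons (α := fun _ => Bool) false g)) := by
        rw [edgeWeight, sum_cube_cons, Finset.mul_sum]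
        refine Finset.sum_congr rfl fun g _ => ?_
        simp only [Fin.cons_zero, Fin.update_cons_zero, Bool.not_true, Bool.not_false]
        rw [min_comm (w (Fin.cons false g)), two_mul]
      have hs : ∀ j : Fin s, edgeWeight w j.succ ≤
          edgeWeight (fun g => max (w (Fin.cons (α := fun _ => Bool) true g))
            (w (Fin.cons (α := fun _ => Bool) false g))) j +
          edgeWeight (fun g => min (w (Fin.cons (α := fun _ => Bool) true g))
            (w (Fin.cons (α := fun _ => Bool) false g))) j := by
        intro j
        rw [edgeWeight, sum_cube_cons, edgeWeight, edgeWeight, ← Finset.sum_add_distrib]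
        refine Finset.sum_le_sum fun g _ => ?_
        simp only [Fin.cons_succ, ← Fin.cons_update]
        omega
      have hsum := Finset.sum_le_sum fun j (_ : j ∈ Finset.univ) => hs j
      rw [Finset.sum_add_distrib] at hsum
      rw [Fin.sum_univ_succ, h0, sum_cube_cons_eq_max_add_min w]
      nlinarith

/-- A form of the Sauer–Shelah lemma. -/
theorem sum_mul_pow_le_of_noShatter {t : ℝ} (ht0 : 0 ≤ t) (ht1 : t ≤ 1) {s : ℕ} :
    ∀ {D : ℕ} {w : (Fin s → Bool) → ℕ}, (∀ f, w f ≤ 1) → NoShatter D w →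
      ((∑ f, w f : ℕ) : ℝ) * t ^ D ≤ t * (1 + t) ^ s := by
  induction s with
  | zero =>
    rintro (_ | D) w hw h
    · simp [h.eq_zero, ht0]
    · have h1 : ((∑ f, w f : ℕ) : ℝ) ≤ 1 := by
        simpa using hw _
      have h2 : t ^ (D + 1) ≤ t := by
        rw [pow_succ]
        exact mul_le_of_le_one_left ht0 (pow_le_one₀ ht0 ht1)
      calc _ ≤ 1 * t := mul_le_mul h1 h2 (by positivity) zero_le_one
        _ = _ := by simp
  | succ s ih =>
    rintro (_ | D) w hw h
    · simp only [h.eq_zero, Finset.sum_const_zero, Nat.cast_zero, zero_mul]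
      positivity
    · have hmax := ih (fun g => max_le (hw _) (hw _)) h.max_cons
      have hmin := ih (fun g => (min_le_left _ _).trans (hw _)) h.min_cons
      have := mul_le_mul_of_nonneg_left hmin ht0
      rw [sum_cube_cons_eq_max_add_min w, Nat.cast_add, add_mul]
      calc _ ≤ t * (1 + t) ^ s + t * (t * (1 + t) ^ s) := by
            refine add_le_add hmax (le_trans (le_of_eq ?_) this)
            ring
        _ = _ := by ring

/-- A point separates `2 * p * q` ordered pairs of `S` if it splits `S` into parts of sizes
`p` and `q`. -/
theorem sum_separated_pairs_le {I : Type*} (S : Finset I) (f : I → Bool) :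
    (∑ i ∈ S, ∑ i' ∈ S, if f i ≠ f i' then (1 : ℝ) else 0) ≤
      2 * S.card * (min (S.filter (f · = true)).card (S.filter (f · = false)).card : ℝ) := by
  have hF : S.filter (¬ f · = true) = S.filter (f · = false) := by simp
  have hcard : ((S.filter (f · = true)).card : ℝ) + (S.filter (f · = false)).card = S.card := by
    rw [← hF]
    exact_mod_cast Finset.card_filter_add_card_filter_not (s := S) (f · = true)
  have h1 : ∀ i ∈ S.filter (f · = true),
      (∑ i' ∈ S, if f i ≠ f i' then (1 : ℝ) else 0) = (S.filter (f · = false)).card := by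
    intro i hi
    rw [Finset.sum_boole, (Finset.mem_filter.1 hi).2]
    congr 2
    ext i'
    simp
  have h2 : ∀ i ∈ S.filter (f · = false),
      (∑ i' ∈ S, if f i ≠ f i' then (1 : ℝ) else 0) = (S.filter (f · = true)).card := by
    intro i hi
    rw [Finset.sum_boole, (Finset.mem_filter.1 hi).2]
    congr 2
    ext i'
    simp
  rw [← Finset.sum_filter_add_sum_filter_not S (f · = true), hF, Finset.sum_congr rfl h1,
    Finset.sum_congr rfl h2, ← hcard]
  simp only [Finset.sum_const, nsmul_eq_mul]
  have hp : (0 : ℝ) ≤ (S.filter (f · = true)).card := Nat.cast_nonneg _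
  have hq : (0 : ℝ) ≤ (S.filter (f · = false)).card := Nat.cast_nonneg _
  rcases le_total ((S.filter (f · = true)).card : ℝ) (S.filter (f · = false)).card with h | h
  · rw [min_eq_left h]
    nlinarith
  · rw [min_eq_right h]
    nlinarith

/-- A random point splits a set of pairwise separated concepts evenly on average. -/
theorem le_sum_min_split {I X : Type*} [Fintype X] {c : I → X → Bool} {δ : ℝ}
    (hsep : ∀ i i', i ≠ i' →
      δ * Fintype.card X ≤ (Finset.univ.filter fun x => c i x ≠ c i' x).card)
    (S : Finset I) :
    ((S.card : ℝ) - (min S.card 1 : ℕ)) * (δ * Fintype.card X) ≤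
      2 * ∑ a, (min (S.filter (c · a = true)).card (S.filter (c · a = false)).card : ℝ) := by
  classical
  rcases Nat.eq_zero_or_pos S.card with h0 | hpos
  · rw [h0, Nat.zero_min, sub_self, zero_mul]
    positivity
  have hupper := fun a => sum_separated_pairs_le S (c · a)
  have hlower : (S.card : ℝ) * ((S.card - 1) * (δ * Fintype.card X)) ≤
      ∑ i ∈ S, ∑ i' ∈ S, ∑ a, if c i a ≠ c i' a then (1 : ℝ) else 0 := by
    rw [← nsmul_eq_mul, ← Finset.sum_const]
    refine Finset.sum_le_sum fun i hi => ?_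
    calc ((S.card : ℝ) - 1) * (δ * Fintype.card X)
        = ∑ i' ∈ S, (δ * Fintype.card X - if i = i' then δ * Fintype.card X else 0) := by
          rw [Finset.sum_sub_distrib, Finset.sum_ite_eq, if_pos hi, Finset.sum_const, nsmul_eq_mul]
          ring
      _ ≤ _ := by
          refine Finset.sum_le_sum fun i' _ => ?_
          by_cases h : i = i'
          · simp [h]
          · rw [if_neg h, sub_zero, Finset.sum_boole]
            exact hsep i i' h
  have hswap : (∑ i ∈ S, ∑ i' ∈ S, ∑ a, if c i a ≠ c i' a then (1 : ℝ) else 0) =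
      ∑ a, ∑ i ∈ S, ∑ i' ∈ S, if c i a ≠ c i' a then (1 : ℝ) else 0 := by
    rw [Finset.sum_congr rfl fun i _ => Finset.sum_comm, Finset.sum_comm]
  rw [hswap] at hlower
  have hall := hlower.trans (Finset.sum_le_sum fun a _ => hupper a)
  rw [← Finset.mul_sum] at hall
  rw [min_eq_right hpos, Nat.cast_one]
  have hpos' : (0 : ℝ) < S.card := by exact_mod_cast hpos
  refine le_of_mul_le_mul_left (hall.trans (le_of_eq ?_)) hpos'
  ring

section Packing

variable {I X : Type*} [Fintype I]

/-- The number of concepts whose trace on the sample `y` is `g`. -/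
def traceWeight (c : I → X → Bool) {s : ℕ} (y : Fin s → X) (g : Fin s → Bool) : ℕ :=
  (Finset.univ.filter fun i => (fun j => c i (y j)) = g).card

theorem sum_traceWeight (c : I → X → Bool) {s : ℕ} (y : Fin s → X) :
    ∑ g, traceWeight c y g = Fintype.card I :=
  (Finset.card_eq_sum_card_fiberwise (fun _ _ => Finset.mem_coe.2 (Finset.mem_univ _))).symm

theorem noShatter_traceWeight {c : I → X → Bool} {D : ℕ}
    (hc : ¬ ∃ v : Fin D → X, ∀ b : Fin D → Bool, ∃ i, ∀ j, c i (v j) = b j)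
    {s : ℕ} (y : Fin s → X) : NoShatter D (traceWeight c y) := by
  rintro ⟨e, he⟩
  refine hc ⟨y ∘ e, fun b => ?_⟩
  obtain ⟨f, hf, hfb⟩ := he b
  obtain ⟨i, hi⟩ := Finset.card_ne_zero.1 hf
  rw [Finset.mem_filter] at hi
  exact ⟨i, fun j => by rw [← hfb, ← hi.2]; rfl⟩

theorem edgeWeight_traceWeight_insertNth (c : I → X → Bool) {s : ℕ} (j : Fin (s + 1)) (a : X)
    (z : Fin s → X) :
    edgeWeight (traceWeight c (j.insertNth (α := fun _ => X) a z)) j =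
      2 * ∑ g : Fin s → Bool,
        min (Finset.univ.filter fun i => (fun l => c i (z l)) = g ∧ c i a = true).card
          (Finset.univ.filter fun i => (fun l => c i (z l)) = g ∧ c i a = false).card := by
  have key : ∀ (b : Bool) (g : Fin s → Bool),
      traceWeight c (j.insertNth (α := fun _ => X) a z) (j.insertNth (α := fun _ => Bool) b g) =
        (Finset.univ.filter fun i => (fun l => c i (z l)) = g ∧ c i a = b).card := by
    intro b g
    rw [traceWeight]
    congr 1
    ext i
    simp only [Finset.mem_filter, Finset.mem_univ, true_and]
    rw [Fin.eq_insertNth_iff]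
    have : (j.removeNth fun l => c i (j.insertNth (α := fun _ => X) a z l)) =
        fun l => c i (z l) := by
      ext l
      simp [Fin.removeNth]
    simp [this, and_comm]
  rw [edgeWeight, sum_cube_insertNth j, Finset.mul_sum]
  refine Finset.sum_congr rfl fun g _ => ?_
  simp only [Fin.insertNth_apply_same, Fin.update_insertNth, Bool.not_true, Bool.not_false, key]
  omega

/-- **Haussler's packing lemma**. -/
theorem card_le_of_separated [Fintype X] [Nonempty X] {c : I → X → Bool} {δ : ℝ} (hδ0 : 0 < δ)
    (hδ1 : δ ≤ 1) {d : ℕ}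
    (hsep : ∀ i i', i ≠ i' →
      δ * Fintype.card X ≤ (Finset.univ.filter fun x => c i x ≠ c i' x).card)
    (hc : ¬ ∃ v : Fin (d + 1) → X, ∀ b : Fin (d + 1) → Bool, ∃ i, ∀ j, c i (v j) = b j) :
    (Fintype.card I : ℝ) ≤ (24 / δ) ^ d := by
  have hXpos : (0 : ℝ) < Fintype.card X := by exact_mod_cast Fintype.card_pos
  set N := ⌊4 * d / δ⌋₊ with hN
  have hN1 : (N : ℝ) ≤ 4 * d / δ := Nat.floor_le (by positivity)
  have hN2 : 4 * d / δ < N + 1 := Nat.lt_floor_add_one _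
  set t := δ / 4 with ht
  have ht0 : 0 < t := by positivity
  obtain ⟨Φ, hΦ⟩ : ∃ Φ : ℝ, Φ = (Real.exp 1 / t) ^ d := ⟨_, rfl⟩
  have hsauer : ∀ z : Fin N → X, ((∑ g, min (traceWeight c z g) 1 : ℕ) : ℝ) ≤ Φ := by
    intro z
    have hns : NoShatter (d + 1) (fun g => min (traceWeight c z g) 1) := by
      rintro ⟨e, he⟩
      refine noShatter_traceWeight hc z ⟨e, fun b => ?_⟩
      obtain ⟨f, hf, hfb⟩ := he b
      exact ⟨f, fun h0 => hf (by simp [h0]), hfb⟩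
    have h1 := sum_mul_pow_le_of_noShatter ht0.le (by linarith) (fun f => min_le_right _ _) hns
    have h2 : (1 + t) ^ N ≤ Real.exp 1 ^ d := by
      calc (1 + t) ^ N ≤ Real.exp t ^ N := by
            gcongr
            linarith [Real.add_one_le_exp t]
        _ = Real.exp (N * t) := (Real.exp_nat_mul _ _).symm
        _ ≤ Real.exp (d * 1) := by
            rw [Real.exp_le_exp]
            calc N * t ≤ 4 * d / δ * t := by gcongr
              _ = d * 1 := by rw [ht]; field_simp
        _ = _ := Real.exp_nat_mul _ _
    rw [hΦ, div_pow, le_div_iff₀ (by positivity)]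
    refine le_of_mul_le_mul_left ?_ ht0
    calc _ = _ := by ring
      _ ≤ _ := h1
      _ ≤ _ := by gcongr
  have hdir : ∀ j : Fin (N + 1), (Fintype.card X : ℝ) ^ (N + 1) * (δ * (Fintype.card I - Φ)) ≤
      ∑ y : Fin (N + 1) → X, (edgeWeight (traceWeight c y) j : ℝ) := by
    intro j
    rw [← (Fin.insertNthEquiv (fun _ => X) j).sum_comp, Fintype.sum_prod_type_right]
    have hz : ∀ z : Fin N → X, Fintype.card X * (δ * (Fintype.card I - Φ)) ≤
        ∑ a, (edgeWeight (traceWeight c (Fin.insertNthEquiv (fun _ => X) j (a, z))) j : ℝ) := by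
      intro z
      have hg := Finset.sum_le_sum fun (g : Fin N → Bool) (_ : g ∈ Finset.univ) =>
        le_sum_min_split hsep (Finset.univ.filter fun i => (fun l => c i (z l)) = g)
      rw [← Finset.sum_mul, Finset.sum_sub_distrib, ← Finset.mul_sum, Finset.sum_comm] at hg
      have h1 := hsauer z
      have h2 := sum_traceWeight c z
      simp only [traceWeight] at h1 h2
      simp only [Finset.filter_filter] at hg
      rw [← Nat.cast_sum, ← Nat.cast_sum, h2] at hg
      have h3 : ∀ a, (edgeWeight (traceWeight c (Fin.insertNthEquiv (fun _ => X) j (a, z))) j : ℝ) =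
          2 * ∑ g : Fin N → Bool,
            (min (Finset.univ.filter fun i => (fun l => c i (z l)) = g ∧ c i a = true).card
            (Finset.univ.filter fun i => (fun l => c i (z l)) = g ∧ c i a = false).card : ℝ) := by
        intro a
        exact_mod_cast congrArg (Nat.cast (R := ℝ)) (edgeWeight_traceWeight_insertNth c j a z)
      rw [Finset.sum_congr rfl fun a _ => h3 a, ← Finset.mul_sum]
      refine le_trans ?_ hg
      calc _ = (Fintype.card I - Φ) * (δ * Fintype.card X) := by ring
        _ ≤ _ := by gcongr
    refine le_trans (le_of_eq ?_) (Finset.sum_le_sum fun z _ => hz z)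
    simp only [Finset.sum_const, Finset.card_univ, Fintype.card_fun, Fintype.card_fin, nsmul_eq_mul]
    push_cast
    ring
  have htotal : ∑ y : Fin (N + 1) → X, ∑ j, (edgeWeight (traceWeight c y) j : ℝ) ≤
      (Fintype.card X : ℝ) ^ (N + 1) * (2 * d * Fintype.card I) := by
    have hy : ∀ y : Fin (N + 1) → X,
        ∑ j, (edgeWeight (traceWeight c y) j : ℝ) ≤ 2 * d * Fintype.card I := by
      intro y
      have := sum_edgeWeight_add_le (noShatter_traceWeight hc y)
      rw [sum_traceWeight] at this
      have h : ∑ j, edgeWeight (traceWeight c y) j ≤ 2 * d * Fintype.card I := by linarith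
      exact_mod_cast h
    refine (Finset.sum_le_sum fun y _ => hy y).trans (le_of_eq ?_)
    simp only [Finset.sum_const, Finset.card_univ, Fintype.card_fun, Fintype.card_fin, nsmul_eq_mul]
    push_cast
    ring
  have hmain : ((N : ℝ) + 1) * (δ * (Fintype.card I - Φ)) ≤ 2 * d * Fintype.card I := by
    have h := Finset.sum_le_sum fun j (_ : j ∈ Finset.univ) => hdir j
    rw [Finset.sum_comm, Finset.sum_const, Finset.card_univ, Fintype.card_fin, nsmul_eq_mul] at h
    refine le_of_mul_le_mul_left ((le_of_eq ?_).trans (h.trans htotal))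
      (pow_pos hXpos (N + 1))
    push_cast
    ring
  rw [div_lt_iff₀ hδ0] at hN2
  have hexp := Real.exp_one_lt_d9
  rcases Nat.eq_zero_or_pos d with hd | hd
  · subst hd
    simp only [pow_zero] at hΦ ⊢
    simp only [Nat.cast_zero, mul_zero, zero_mul] at hmain
    have : (0 : ℝ) < (N + 1) * δ := by positivity
    rw [hΦ, ← mul_assoc] at hmain
    linarith [nonpos_of_mul_nonpos_right hmain this]
  · have hd' : (0 : ℝ) < d := by exact_mod_cast hd
    have hIΦ : (Fintype.card I : ℝ) ≤ 2 * Φ := by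
      by_contra! hlt
      have hΦ0 : 0 ≤ Φ := by rw [hΦ]; positivity
      have hpos : 0 < (Fintype.card I : ℝ) - Φ := by linarith
      nlinarith [mul_lt_mul_of_pos_right hN2 hpos]
    calc (Fintype.card I : ℝ) ≤ 2 * Φ := hIΦ
      _ ≤ 2 ^ d * Φ := by
          rw [hΦ]
          gcongr
          exact le_self_pow₀ one_le_two hd.ne'
      _ = (2 * (Real.exp 1 / t)) ^ d := by rw [hΦ, mul_pow]
      _ ≤ (24 / δ) ^ d := by
          gcongr
          rw [ht, div_div_eq_mul_div, ← mul_div_assoc]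
          gcongr
          linarith

end Packing

/-- A finite set in which all `r`-separated subsets have at most `M` elements is covered by at most
`M` points. -/
theorem exists_cover_of_separated_card_le {V : Type*} (U : Finset V)
    {r : V → V → Prop} (hrefl : ∀ x, r x x) (hsymm : ∀ x y, r x y → r y x) {M : ℕ}
    (hM : ∀ T ⊆ U, (∀ x ∈ T, ∀ y ∈ T, x ≠ y → ¬ r x y) → T.card ≠ M + 1) :
    ∃ m ≤ M, ∃ h : Fin m → V, (∀ i, h i ∈ U) ∧ ∀ x ∈ U, ∃ i, r x (h i) := by
  classical
  obtain ⟨T, hT, hmax⟩ :=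
    (U.powerset.filter fun T => ∀ x ∈ T, ∀ y ∈ T, x ≠ y → ¬ r x y).exists_max_image
      Finset.card ⟨∅, by simp⟩
  simp only [Finset.mem_filter, Finset.mem_powerset] at hT hmax
  refine ⟨T.card, ?_, fun i => T.equivFin.symm i, fun i => hT.1 (T.equivFin.symm i).2, ?_⟩
  · by_contra! hlt
    obtain ⟨T', hT', hcard⟩ := Finset.exists_subset_card_eq (Nat.succ_le_of_lt hlt)
    exact hM T' (hT'.trans hT.1) (fun x hx y hy => hT.2 x (hT' hx) y (hT' hy)) hcard
  · intro x hx
    suffices ∃ y ∈ T, r x y by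
      obtain ⟨y, hy, hxy⟩ := this
      exact ⟨T.equivFin ⟨y, hy⟩, by simpa using hxy⟩
    by_contra! hno
    have hxT : x ∉ T := fun hxT => hno x hxT (hrefl x)
    have := hmax (insert x T) ⟨Finset.insert_subset hx hT.1, ?_⟩
    · rw [Finset.card_insert_of_notMem hxT] at this
      omega
    · intro a ha b hb hab
      rcases Finset.mem_insert.1 ha with rfl | ha' <;> rcases Finset.mem_insert.1 hb with rfl | hb'
      · exact absurd rfl hab
      · exact hno b hb'
      · exact fun h => hno a ha' (hsymm _ _ h)
      · exact hT.2 a ha' b hb' hab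

theorem mem_image_sub_right {V : Type*} [AddGroup V] [DecidableEq V] {A : Finset V} {h x : V} :
    x ∈ A.image (· - h) ↔ x + h ∈ A := by
  rw [Finset.mem_image]
  exact ⟨fun ⟨a, ha, hax⟩ => by simpa [← hax] using ha, fun hx => ⟨x + h, hx, by simp⟩⟩

/-- Translates of a 3-coloring by elements of `T` which are pairwise more than `δ`-separated are few
in number, provided the third color is rare and the VC-dimension is at most `k`. -/
theorem card_le_of_translates_separated {V : Type*} [AddGroup V] [Fintype V] [DecidableEq V] {k : ℕ}
    {δ : ℝ} (hδ0 : 0 < δ) (hδ1 : δ ≤ 1) {A0 A1 A2 : Finset V}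
    (hpart : ∀ x : V,
      (x ∈ A0 ∧ x ∉ A1 ∧ x ∉ A2) ∨ (x ∉ A0 ∧ x ∈ A1 ∧ x ∉ A2) ∨ (x ∉ A0 ∧ x ∉ A1 ∧ x ∈ A2))
    {T : Finset V} (hA2 : (T.card : ℝ) * A2.card ≤ δ / 2 * Fintype.card V)
    (hVC : ¬ ∃ (v : Fin (k + 1) → V) (w : Set (Fin (k + 1)) → V), (∀ S, w S ∈ T) ∧
      ∀ (i : Fin (k + 1)) (S : Set (Fin (k + 1))),
        (i ∈ S → v i + w S ∈ A1) ∧ (i ∉ S → v i + w S ∈ A0))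
    (hsep : ∀ x ∈ T, ∀ y ∈ T, x ≠ y →
      ¬ (((symmDiff (A0.image (· - x)) (A0.image (· - y))).card : ℝ) ≤ δ * Fintype.card V ∧
        ((symmDiff (A1.image (· - x)) (A1.image (· - y))).card : ℝ) ≤ δ * Fintype.card V)) :
    (T.card : ℝ) ≤ (48 / δ) ^ k := by
  classical
  have hV : (0 : ℝ) < Fintype.card V := by exact_mod_cast Fintype.card_pos
  let bad : Finset V := T.biUnion fun h => A2.image (· - h)
  have hmem : ∀ x, x ∈ bad ↔ ∃ h ∈ T, x + h ∈ A2 := by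
    intro x
    simp only [bad, Finset.mem_biUnion, mem_image_sub_right]
  have hbad : (bad.card : ℝ) ≤ δ / 2 * Fintype.card V := by
    refine le_trans ?_ hA2
    exact_mod_cast Finset.card_biUnion_le_card_mul _ _ _ fun h _ => Finset.card_image_le
  let X := {x : V // x ∉ bad}
  have hX : Nonempty X := by
    by_contra hne
    have hall : bad = Finset.univ := by
      ext x
      simp only [Finset.mem_univ, iff_true]
      by_contra hx
      exact hne ⟨⟨x, hx⟩⟩
    rw [hall, Finset.card_univ] at hbad
    nlinarith
  have hXle : (Fintype.card X : ℝ) ≤ Fintype.card V := by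
    exact_mod_cast Fintype.card_subtype_le _
  have hgood : ∀ (x : X) (h : T), x.1 + h.1 ∈ A0 ↔ x.1 + h.1 ∉ A1 := by
    intro x h
    have h2 : x.1 + h.1 ∉ A2 := fun h2 => x.2 ((hmem _).2 ⟨h, h.2, h2⟩)
    have := hpart (x.1 + h.1)
    tauto
  let c : T → X → Bool := fun h x => decide (x.1 + h.1 ∈ A1)
  have hdiff : ∀ (h h' : T) (A : Finset V), (A = A0 ∨ A = A1) →
      δ * Fintype.card V < ((symmDiff (A.image (· - h.1)) (A.image (· - h'.1))).card : ℝ) →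
      δ / 2 * Fintype.card X ≤ (Finset.univ.filter fun x => c h x ≠ c h' x).card := by
    intro h h' A hA hlt
    have hsub : symmDiff (A.image (· - h.1)) (A.image (· - h'.1)) ⊆
        bad ∪ (Finset.univ.filter fun x => c h x ≠ c h' x).image Subtype.val := by
      intro x hx
      rw [Finset.mem_union]
      by_cases hxb : x ∈ bad
      · exact Or.inl hxb
      · refine Or.inr (Finset.mem_image.2 ⟨⟨x, hxb⟩, ?_, rfl⟩)
        rw [Finset.mem_symmDiff, mem_image_sub_right, mem_image_sub_right] at hx
        have h1 := hgood ⟨x, hxb⟩ h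
        have h2 := hgood ⟨x, hxb⟩ h'
        simp only [Finset.mem_filter, Finset.mem_univ, true_and, c, ne_eq, decide_eq_decide]
        rcases hA with rfl | rfl <;> tauto
    have hcard : ((symmDiff (A.image (· - h.1)) (A.image (· - h'.1))).card : ℝ) ≤
        bad.card + (Finset.univ.filter fun x => c h x ≠ c h' x).card := by
      exact_mod_cast (Finset.card_le_card hsub).trans
        ((Finset.card_union_le _ _).trans (Nat.add_le_add_left Finset.card_image_le _))
    nlinarith
  have hpack := card_le_of_separated (c := c) (δ := δ / 2) (d := k) (by positivity) (by linarith)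
    (fun h h' hne => by
      have := hsep h.1 h.2 h'.1 h'.2 (fun heq => hne (Subtype.ext heq))
      rw [not_and_or, not_le, not_le] at this
      exact this.elim (hdiff h h' A0 (Or.inl rfl)) (hdiff h h' A1 (Or.inr rfl)))
    (by
      rintro ⟨v, hv⟩
      choose w hw using hv
      refine hVC ⟨fun i => (v i).1, fun S => (w fun i => decide (i ∈ S)).1, fun S => (w _).2,
        fun i S => ?_⟩
      have := hw (fun i => decide (i ∈ S)) i
      simp only [c, decide_eq_decide] at this
      exact ⟨this.2, fun hi => (hgood _ _).2 fun h1 => hi (this.1 h1)⟩)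
  rw [Fintype.card_coe] at hpack
  refine hpack.trans (le_of_eq ?_)
  congr 1
  field_simp
  norm_num


/-- Representation lemma for 3-colorings relative to a subspace. -/
theorem stmt_7 (p n k : ℕ) [Fact p.Prime] (δ ε : ℝ)
    (hδ0 : 0 < δ) (hδ1 : δ < 1/4) (hε0 : 0 < ε) (hεδ : ε ≤ (δ/120)^(k+1))
    (H : AddSubgroup (Fin n → ZMod p)) (A0 A1 A2 : Finset (Fin n → ZMod p))
    (hpart : ∀ x : Fin n → ZMod p,
      (x ∈ A0 ∧ x ∉ A1 ∧ x ∉ A2) ∨ (x ∉ A0 ∧ x ∈ A1 ∧ x ∉ A2) ∨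
      (x ∉ A0 ∧ x ∉ A1 ∧ x ∈ A2))
    (hA2 : (A2.card : ℝ) ≤ ε * Fintype.card (Fin n → ZMod p))
    (hVC : ¬ ∃ (v : Fin (k+1) → (Fin n → ZMod p))
        (w : Set (Fin (k+1)) → (Fin n → ZMod p)),
      (∀ S, w S ∈ H) ∧
      ∀ (i : Fin (k+1)) (S : Set (Fin (k+1))),
        (i ∈ S → v i + w S ∈ A1) ∧ (i ∉ S → v i + w S ∈ A0)) :
    ∃ m : ℕ, m ≤ ⌈(120/δ)^k⌉₊ ∧
      ∃ h : Fin m → (Fin n → ZMod p), (∀ i, h i ∈ H) ∧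
        ∀ x ∈ H, ∃ i : Fin m,
          ((symmDiff (A0.image (· - x)) (A0.image (· - h i))).card : ℝ)
            ≤ δ * Fintype.card (Fin n → ZMod p) ∧
          ((symmDiff (A1.image (· - x)) (A1.image (· - h i))).card : ℝ)
            ≤ δ * Fintype.card (Fin n → ZMod p) := by
  classical
  set M := ⌈(120 / δ) ^ k⌉₊ with hM
  have hMle : (120 / δ) ^ k ≤ M := Nat.le_ceil _
  have hMlt : (M : ℝ) < (120 / δ) ^ k + 1 := Nat.ceil_lt_add_one (by positivity)
  have hone : 1 ≤ (120 / δ) ^ k := one_le_pow₀ (by rw [le_div_iff₀ hδ0]; linarith)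
  have hV : (0 : ℝ) < Fintype.card (Fin n → ZMod p) := by exact_mod_cast Fintype.card_pos
  obtain ⟨m, hm, h, hH, hcov⟩ := exists_cover_of_separated_card_le
    (Finset.univ.filter (· ∈ H))
    (r := fun x y =>
      ((symmDiff (A0.image (· - x)) (A0.image (· - y))).card : ℝ)
          ≤ δ * Fintype.card (Fin n → ZMod p) ∧
        ((symmDiff (A1.image (· - x)) (A1.image (· - y))).card : ℝ)
          ≤ δ * Fintype.card (Fin n → ZMod p))
    (M := M)
    (fun x => by
      simp only [symmDiff_self, Finset.bot_eq_empty, Finset.card_empty, Nat.cast_zero, and_self]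
      positivity)
    (fun x y hxy => by rwa [symmDiff_comm, symmDiff_comm (A1.image (· - y))])
    (fun T hTU hsep hcard => by
      have hTM : (T.card : ℝ) = M + 1 := by exact_mod_cast hcard
      have hTε : (T.card : ℝ) * ε ≤ δ / 2 := by
        calc (T.card : ℝ) * ε ≤ (3 * (120 / δ) ^ k) * (δ / 120) ^ (k + 1) := by
              gcongr
              linarith
          _ = 3 * ((120 / δ) * (δ / 120)) ^ k * (δ / 120) := by rw [mul_pow]; ring
          _ = 3 * (δ / 120) := by
              rw [show 120 / δ * (δ / 120) = 1 by field_simp]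
              simp
          _ ≤ δ / 2 := by linarith
      have hTH : ∀ x ∈ T, x ∈ H := fun x hx => (Finset.mem_filter.1 (hTU hx)).2
      have hbound := card_le_of_translates_separated (k := k) hδ0 (by linarith) hpart (T := T)
        (by
          calc (T.card : ℝ) * A2.card ≤ T.card * (ε * Fintype.card (Fin n → ZMod p)) := by gcongr
            _ = T.card * ε * Fintype.card (Fin n → ZMod p) := by ring
            _ ≤ _ := by gcongr)
        (fun ⟨v, w, hw, hvw⟩ => hVC ⟨v, w, fun S => hTH _ (hw S), hvw⟩) hsep
      have : (48 / δ) ^ k ≤ (120 / δ) ^ k := by gcongr; norm_num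
      linarith)
  exact ⟨m, hm, h, fun i => (Finset.mem_filter.1 (hH i)).2,
    fun x hx => hcov x (Finset.mem_filter.2 ⟨Finset.mem_univ _, hx⟩)⟩
end
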